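/- For all r, σ > 0 and γ > 0, the joint Cramér–Rao bound on conductivity for the MI-ISAC problem admits the closed form (J⁻¹)₂₂ = 4·σ²·(β(r,σ)² + α(σ)²)/(9·γ·α(σ)²). -/

import Mathlib

open Matrix Real

/-- Field attenuation constant `α(σ) = √(π f₀ μ₀ σ)`. -/
noncomputable def miAlpha (f₀ μ₀ σ : ℝ) : ℝ := Real.sqrt (Real.pi * f₀ * μ₀ * σ)

/-- `β(r,σ) = 3/r + α(σ)`. -/
noncomputable def miBeta (f₀ μ₀ r σ : ℝ) : ℝ := 3 / r + miAlpha f₀ μ₀ σ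

/-- The MI-ISAC Fisher information matrix for joint range–conductivity estimation. -/
noncomputable def miFIM (f₀ μ₀ r σ γ : ℝ) : Matrix (Fin 2) (Fin 2) ℝ :=
  !![γ * (miBeta f₀ μ₀ r σ ^ 2 + miAlpha f₀ μ₀ σ ^ 2),
     γ * miAlpha f₀ μ₀ σ * r * (miBeta f₀ μ₀ r σ + miAlpha f₀ μ₀ σ) / (2 * σ);
     γ * miAlpha f₀ μ₀ σ * r * (miBeta f₀ μ₀ r σ + miAlpha f₀ μ₀ σ) / (2 * σ),
     γ * miAlpha f₀ μ₀ σ ^ 2 * r ^ 2 / (2 * σ ^ 2)]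

/-! For a `2 × 2` matrix, `(J⁻¹)₂₂ = J₁₁ / det J`. Since `2(β² + α²) - (β + α)² = (β - α)²`, the
determinant of `J` is the square of `γ α r (β - α) / (2σ)`, and `r (β - α) = 3`. -/

theorem inv_fin_two_apply_one_one {K : Type*} [Field K] (A : Matrix (Fin 2) (Fin 2) K) :
    A⁻¹ 1 1 = A 0 0 / A.det := by
  simp [inv_def, adjugate_fin_two, div_eq_inv_mul]

theorem miAlpha_pos {f₀ μ₀ σ : ℝ} (hf₀ : 0 < f₀) (hμ₀ : 0 < μ₀) (hσ : 0 < σ) :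
    0 < miAlpha f₀ μ₀ σ :=
  Real.sqrt_pos.mpr (by positivity)

theorem mul_miBeta_sub_miAlpha (f₀ μ₀ σ : ℝ) {r : ℝ} (hr : r ≠ 0) :
    r * (miBeta f₀ μ₀ r σ - miAlpha f₀ μ₀ σ) = 3 := by
  rw [miBeta, add_sub_cancel_right, mul_div_cancel₀ _ hr]

theorem miFIM_apply_zero_zero (f₀ μ₀ r σ γ : ℝ) :
    miFIM f₀ μ₀ r σ γ 0 0 = γ * (miBeta f₀ μ₀ r σ ^ 2 + miAlpha f₀ μ₀ σ ^ 2) :=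
  rfl

theorem det_miFIM_eq_sq (f₀ μ₀ r σ γ : ℝ) :
    (miFIM f₀ μ₀ r σ γ).det =
      (γ * miAlpha f₀ μ₀ σ * (r * (miBeta f₀ μ₀ r σ - miAlpha f₀ μ₀ σ)) / (2 * σ)) ^ 2 := by
  rw [miFIM, det_fin_two_of]
  ring

theorem det_miFIM (f₀ μ₀ σ γ : ℝ) {r : ℝ} (hr : r ≠ 0) :
    (miFIM f₀ μ₀ r σ γ).det = 9 * γ ^ 2 * miAlpha f₀ μ₀ σ ^ 2 / (4 * σ ^ 2) := by
  rw [det_miFIM_eq_sq, mul_miBeta_sub_miAlpha f₀ μ₀ σ hr]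
  ring

/-- The joint Cramér–Rao bound on conductivity admits the closed form
`(J⁻¹)₂₂ = 4σ²(β² + α²)/(9γα²)`. -/
theorem stmt_11 (f₀ μ₀ : ℝ) (hf₀ : 0 < f₀) (hμ₀ : 0 < μ₀)
    (r σ γ : ℝ) (hr : 0 < r) (hσ : 0 < σ) (hγ : 0 < γ) :
    (miFIM f₀ μ₀ r σ γ)⁻¹ 1 1 =
      4 * σ ^ 2 * (miBeta f₀ μ₀ r σ ^ 2 + miAlpha f₀ μ₀ σ ^ 2) /
        (9 * γ * miAlpha f₀ μ₀ σ ^ 2) := by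
  have hα : 0 < miAlpha f₀ μ₀ σ := miAlpha_pos hf₀ hμ₀ hσ
  rw [inv_fin_two_apply_one_one, miFIM_apply_zero_zero, det_miFIM f₀ μ₀ σ γ hr.ne']
  field_simp
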